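/- arXiv:2401.11786 — 2 statements merged into one kernel-verified Lean document; each statement's English description precedes it below -/
import Mathlib

section
/- Suppose λ₁ ≤ ρ_q < λ₁ + (λ₂−λ₁)/(2+χ_P). Let y* = ψ(u₁), so φ(y*) = λ₁. Then: (i) for any y ∈ Y, φ(y) − λ₁ ≤ (L_P/2)‖y − y*‖²_P; and conversely (ii) for any y ∈ ℝ^{n−1}, if ‖y − y*‖²_P ≤ 2(ρ_q − λ₁)/L_P then y ∈ Y. Here ‖v‖²_P = vᵀPv. -/
open Matrix

noncomputable def Mnorm {n : ℕ} (M : Matrix (Fin n) (Fin n) ℝ) (x : Fin n → ℝ) : ℝ :=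
  Real.sqrt (x ⬝ᵥ (M *ᵥ x))

noncomputable def Rq {n : ℕ} (A M : Matrix (Fin n) (Fin n) ℝ) (x : Fin n → ℝ) : ℝ :=
  (x ⬝ᵥ (A *ᵥ x)) / (x ⬝ᵥ (M *ᵥ x))

/-- ψ(x) = QᵀMx / (qᵀMx) -/
noncomputable def psiMap {n m : ℕ} (M : Matrix (Fin n) (Fin n) ℝ) (q : Fin n → ℝ)
    (Q : Matrix (Fin n) (Fin m) ℝ) (x : Fin n → ℝ) : Fin m → ℝ :=
  (q ⬝ᵥ (M *ᵥ x))⁻¹ • ((Qᵀ * M) *ᵥ x)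

/-- ψ†(y) = (Qy + q)/‖Qy + q‖_M -/
noncomputable def psiDag {n m : ℕ} (M : Matrix (Fin n) (Fin n) ℝ) (q : Fin n → ℝ)
    (Q : Matrix (Fin n) (Fin m) ℝ) (y : Fin m → ℝ) : Fin n → ℝ :=
  (Mnorm M (Q *ᵥ y + q))⁻¹ • (Q *ᵥ y + q)

/-- The hemisphere S₊ = {x : ‖x‖_M = 1, qᵀMx > 0}. -/
def Splus {n : ℕ} (M : Matrix (Fin n) (Fin n) ℝ) (q : Fin n → ℝ) : Set (Fin n → ℝ) :=
  {x | Mnorm M x = 1 ∧ 0 < q ⬝ᵥ (M *ᵥ x)}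

/-- X = {x ∈ S₊ : Rq(x) ≤ Rq(q)}. -/
def Xset {n : ℕ} (A M : Matrix (Fin n) (Fin n) ℝ) (q : Fin n → ℝ) : Set (Fin n → ℝ) :=
  {x | x ∈ Splus M q ∧ Rq A M x ≤ Rq A M q}

/-- φ(y) = (yᵀBy + 2yᵀb + ρ)/(yᵀy + 1). -/
noncomputable def phiAux {m : ℕ} (B : Matrix (Fin m) (Fin m) ℝ) (b : Fin m → ℝ) (ρ : ℝ)
    (y : Fin m → ℝ) : ℝ :=
  (y ⬝ᵥ (B *ᵥ y) + 2 * (y ⬝ᵥ b) + ρ) / (y ⬝ᵥ y + 1)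

/-! The function `φ` is the Rayleigh quotient in the affine chart `y ↦ Q y + q` of the hemisphere.
The vector `Q y* + q` is a multiple of `u₁`, which `A - λ₁ M` annihilates, so with `x = Q (y - y*)`

  `φ(y) - λ₁ = (xᵀ A x - λ₁ xᵀ M x) / (1 + yᵀ y)`.

Since `A ≤ λₙ M`, the numerator is at most `(1 - λ₁ / λₙ) xᵀ A x ≤ (1 - λ₁ / λₙ) ξ_max ‖y - y*‖²_P`.
The `χ_P`-term only enlarges `L_P`, so (i) holds at every `y`, and (ii) follows from it. -/

section Pencil

variable {ι : Type*} [Fintype ι] {A M : Matrix ι ι ℝ} {μ c : ℝ}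

/-- The eigenvalues of the pencil `(A, M)`: the `μ` with `A v = μ M v` for some `v ≠ 0`. -/
def pencilSpectrum (A M : Matrix ι ι ℝ) : Set ℝ :=
  {μ | ∃ v : ι → ℝ, v ≠ 0 ∧ A *ᵥ v = μ • (M *ᵥ v)}

lemma dotProduct_mulVec_comm_of_isHermitian (hA : A.IsHermitian) (x y : ι → ℝ) :
    x ⬝ᵥ (A *ᵥ y) = y ⬝ᵥ (A *ᵥ x) := by
  rw [← dotProduct_transpose_mulVec, (isHermitian_iff_isSymm.mp hA).eq]

lemma pos_of_mem_pencilSpectrum (hA : A.PosDef) (hM : M.PosSemidef)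
    (hμ : μ ∈ pencilSpectrum A M) : 0 < μ := by
  obtain ⟨v, hv, hAv⟩ := hμ
  have hpos : 0 < μ * (v ⬝ᵥ (M *ᵥ v)) := by
    simpa [hAv] using hA.dotProduct_mulVec_pos hv
  exact pos_of_mul_pos_left hpos (by simpa using hM.dotProduct_mulVec_nonneg v)

open scoped MatrixOrder in
lemma exists_isUnit_conjTranspose_mul_mul_eq_one [DecidableEq ι] (hM : M.PosDef) :
    ∃ D : Matrix ι ι ℝ, IsUnit D ∧ Dᴴ * M * D = 1 := by
  obtain ⟨C, hC, rfl⟩ :=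
    CStarAlgebra.isStrictlyPositive_iff_eq_star_mul_self.mp hM.isStrictlyPositive
  lift C to (Matrix ι ι ℝ)ˣ using hC
  refine ⟨(C⁻¹ : (Matrix ι ι ℝ)ˣ), C⁻¹.isUnit, ?_⟩
  rw [← star_eq_conjTranspose, Matrix.mul_assoc, Matrix.mul_assoc, C.mul_inv, Matrix.mul_one,
    ← star_mul, C.mul_inv, star_one]

lemma posSemidef_of_pencilSpectrum_nonneg (hA : A.IsHermitian) (hM : M.PosDef)
    (hnonneg : ∀ μ ∈ pencilSpectrum A M, 0 ≤ μ) : A.PosSemidef := by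
  classical
  obtain ⟨D, hD, hDM⟩ := exists_isUnit_conjTranspose_mul_mul_eq_one hM
  have hH : (Dᴴ * A * D).IsHermitian := isHermitian_conjTranspose_mul_mul D hA
  rw [← hD.posSemidef_star_left_conjugate_iff, star_eq_conjTranspose,
    hH.posSemidef_iff_eigenvalues_nonneg]
  intro i
  set w : ι → ℝ := ⇑(hH.eigenvectorBasis i)
  have hw : w ≠ 0 := by
    simpa [w] using hH.eigenvectorBasis.orthonormal.ne_zero i
  have hDw : D *ᵥ w ≠ 0 := fun h => hw <| (mulVec_injective_of_isUnit hD) (by simpa using h)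
  refine hnonneg _ ⟨D *ᵥ w, hDw, ?_⟩
  apply mulVec_injective_of_isUnit hD.star
  have : (Dᴴ * A * D) *ᵥ w = hH.eigenvalues i • ((Dᴴ * M * D) *ᵥ w) := by
    rw [hDM, one_mulVec, hH.mulVec_eigenvectorBasis]
  simpa [mulVec_mulVec, mulVec_smul, star_eq_conjTranspose, Matrix.mul_assoc] using this

lemma dotProduct_mulVec_le_of_mem_upperBounds_pencilSpectrum (hA : A.IsHermitian) (hM : M.PosDef)
    (hc : c ∈ upperBounds (pencilSpectrum A M)) (x : ι → ℝ) :
    x ⬝ᵥ (A *ᵥ x) ≤ c * (x ⬝ᵥ (M *ᵥ x)) := by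
  have hpsd : (c • M - A).PosSemidef := by
    refine posSemidef_of_pencilSpectrum_nonneg ((hM.isHermitian.smul (.all c)).sub hA) hM ?_
    rintro μ ⟨v, hv, hAv⟩
    have : A *ᵥ v = (c - μ) • (M *ᵥ v) := by
      rw [sub_smul, ← hAv, sub_mulVec, smul_mulVec, sub_sub_cancel]
    linarith [hc ⟨v, hv, this⟩]
  simpa [sub_mulVec, smul_mulVec, dotProduct_sub] using hpsd.dotProduct_mulVec_nonneg x

lemma eq_zero_of_forall_dotProduct_mulVec_eq_zero [DecidableEq ι] {u : ι → ι → ℝ}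
    (horth : ∀ i j, u i ⬝ᵥ (M *ᵥ u j) = if i = j then 1 else 0) {x : ι → ℝ}
    (hx : ∀ i, u i ⬝ᵥ (M *ᵥ x) = 0) : x = 0 := by
  have hgram : of u * (M * (of u)ᵀ) = 1 := by
    ext i j
    rw [one_apply, ← horth i j]
    rfl
  have hzero : (of u * M) *ᵥ x = 0 := by
    rw [← mulVec_mulVec]
    exact funext hx
  rw [← one_mulVec x, ← mul_eq_one_comm.mp (Matrix.mul_assoc _ M _ ▸ hgram), ← mulVec_mulVec,
    hzero, mulVec_zero]

lemma pencilSpectrum_subset_range [DecidableEq ι] (hA : A.IsHermitian) (hM : M.IsHermitian)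
    {lam : ι → ℝ} {u : ι → ι → ℝ} (heig : ∀ i, A *ᵥ u i = lam i • (M *ᵥ u i))
    (horth : ∀ i j, u i ⬝ᵥ (M *ᵥ u j) = if i = j then 1 else 0) :
    pencilSpectrum A M ⊆ Set.range lam := by
  rintro μ ⟨v, hv, hAv⟩
  obtain ⟨i, hi⟩ : ∃ i, u i ⬝ᵥ (M *ᵥ v) ≠ 0 := by
    by_contra! h
    exact hv (eq_zero_of_forall_dotProduct_mulVec_eq_zero horth h)
  have hcoeff : μ * (u i ⬝ᵥ (M *ᵥ v)) = lam i * (u i ⬝ᵥ (M *ᵥ v)) := by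
    have := dotProduct_mulVec_comm_of_isHermitian hA (u i) v
    rwa [hAv, heig, dotProduct_smul, dotProduct_smul, smul_eq_mul, smul_eq_mul,
      dotProduct_mulVec_comm_of_isHermitian hM v] at this
  exact ⟨i, (mul_right_cancel₀ hi hcoeff).symm⟩

lemma last_mem_upperBounds_pencilSpectrum {n : ℕ} {A M : Matrix (Fin (n + 1)) (Fin (n + 1)) ℝ}
    (hA : A.IsHermitian) (hM : M.IsHermitian) {lam : Fin (n + 1) → ℝ} (hmono : Monotone lam)
    {u : Fin (n + 1) → Fin (n + 1) → ℝ} (heig : ∀ i, A *ᵥ u i = lam i • (M *ᵥ u i))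
    (horth : ∀ i j, u i ⬝ᵥ (M *ᵥ u j) = if i = j then 1 else 0) :
    lam (Fin.last n) ∈ upperBounds (pencilSpectrum A M) := by
  intro μ hμ
  obtain ⟨i, rfl⟩ := pencilSpectrum_subset_range hA hM heig horth hμ
  exact hmono (Fin.le_last i)

-- `A - μ M` is symmetric and annihilates `w`, so its quadratic form ignores a shift by `w`.
lemma quadForm_add_eigenvector (hA : A.IsHermitian) (hM : M.IsHermitian) {w : ι → ℝ}
    (hw : A *ᵥ w = μ • (M *ᵥ w)) (x : ι → ℝ) :
    (x + w) ⬝ᵥ (A *ᵥ (x + w)) - μ * ((x + w) ⬝ᵥ (M *ᵥ (x + w))) =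
      x ⬝ᵥ (A *ᵥ x) - μ * (x ⬝ᵥ (M *ᵥ x)) := by
  simp only [mulVec_add, dotProduct_add, add_dotProduct,
    dotProduct_mulVec_comm_of_isHermitian hA w x, dotProduct_mulVec_comm_of_isHermitian hM w x,
    hw, dotProduct_smul, smul_eq_mul]
  ring

lemma quadForm_sub_le (hA : A.IsHermitian) (hM : M.PosDef)
    (hc : c ∈ upperBounds (pencilSpectrum A M)) (hc₀ : 0 < c) (hμ : 0 ≤ μ) (x : ι → ℝ) :
    x ⬝ᵥ (A *ᵥ x) - μ * (x ⬝ᵥ (M *ᵥ x)) ≤ (1 - μ / c) * (x ⬝ᵥ (A *ᵥ x)) := by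
  have hle : μ / c * (x ⬝ᵥ (A *ᵥ x)) ≤ μ * (x ⬝ᵥ (M *ᵥ x)) := calc
    _ ≤ μ / c * (c * (x ⬝ᵥ (M *ᵥ x))) := by
      gcongr
      exact dotProduct_mulVec_le_of_mem_upperBounds_pencilSpectrum hA hM hc x
    _ = μ * (x ⬝ᵥ (M *ᵥ x)) := by rw [← mul_assoc, div_mul_cancel₀ _ hc₀.ne']
  linarith

end Pencil

section Congruence

variable {ι κ : Type*} [Fintype ι] [Fintype κ]

lemma mulVec_dotProduct_mulVec (Q : Matrix ι κ ℝ) (A : Matrix ι ι ℝ) (y : κ → ℝ) (z : ι → ℝ) :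
    (Q *ᵥ y) ⬝ᵥ (A *ᵥ z) = y ⬝ᵥ ((Qᵀ * A) *ᵥ z) := by
  rw [← mulVec_mulVec, dotProduct_transpose_mulVec, dotProduct_comm]

lemma mulVec_dotProduct_mulVec_mulVec (Q : Matrix ι κ ℝ) (A : Matrix ι ι ℝ) (y z : κ → ℝ) :
    (Q *ᵥ y) ⬝ᵥ (A *ᵥ (Q *ᵥ z)) = y ⬝ᵥ ((Qᵀ * A * Q) *ᵥ z) := by
  rw [mulVec_dotProduct_mulVec, mulVec_mulVec]

lemma quadForm_mulVec_add {A : Matrix ι ι ℝ} (hA : A.IsHermitian) (Q : Matrix ι κ ℝ)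
    (q : ι → ℝ) (y : κ → ℝ) :
    (Q *ᵥ y + q) ⬝ᵥ (A *ᵥ (Q *ᵥ y + q)) =
      y ⬝ᵥ ((Qᵀ * A * Q) *ᵥ y) + 2 * (y ⬝ᵥ ((Qᵀ * A) *ᵥ q)) + q ⬝ᵥ (A *ᵥ q) := by
  simp only [mulVec_add, dotProduct_add, add_dotProduct,
    dotProduct_mulVec_comm_of_isHermitian hA q (Q *ᵥ y), mulVec_dotProduct_mulVec,
    ← mulVec_mulVec _ (Qᵀ * A)]
  ring

end Congruence

section RayleighQuotient

variable {n : ℕ} {A M : Matrix (Fin n) (Fin n) ℝ} {x : Fin n → ℝ} {c : ℝ}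

lemma Mnorm_smul (M : Matrix (Fin n) (Fin n) ℝ) (c : ℝ) (x : Fin n → ℝ) :
    Mnorm M (c • x) = |c| * Mnorm M x := by
  have hsq : (c • x) ⬝ᵥ (M *ᵥ (c • x)) = c ^ 2 * (x ⬝ᵥ (M *ᵥ x)) := by
    simp only [mulVec_smul, dotProduct_smul, smul_dotProduct, smul_eq_mul]
    ring
  rw [Mnorm, hsq, Real.sqrt_mul (sq_nonneg c), Real.sqrt_sq_eq_abs, Mnorm]

lemma Rq_smul (A M : Matrix (Fin n) (Fin n) ℝ) (hc : c ≠ 0) (x : Fin n → ℝ) :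
    Rq A M (c • x) = Rq A M x := by
  simp only [Rq, mulVec_smul, dotProduct_smul, smul_dotProduct, smul_eq_mul,
    mul_div_mul_left _ _ hc]

lemma Rq_sub (hx : x ⬝ᵥ (M *ᵥ x) ≠ 0) (μ : ℝ) :
    Rq A M x - μ = (x ⬝ᵥ (A *ᵥ x) - μ * (x ⬝ᵥ (M *ᵥ x))) / (x ⬝ᵥ (M *ᵥ x)) := by
  rw [Rq, sub_div, mul_div_cancel_right₀ _ hx]

end RayleighQuotient

/-- `[q, Q]` is `M`-orthonormal, i.e. `[q, Q]ᵀ M [q, Q] = 1`, written blockwise. As `M` is symmetric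
in the applications, the block `qᵀ M Q` is not listed. -/
structure IsMOrthonormalFrame {n m : ℕ} (M : Matrix (Fin n) (Fin n) ℝ) (q : Fin n → ℝ)
    (Q : Matrix (Fin n) (Fin m) ℝ) : Prop where
  dotProduct_self : q ⬝ᵥ (M *ᵥ q) = 1
  transpose_mul_mul : Qᵀ * M * Q = 1
  transpose_mulVec : (Qᵀ * M) *ᵥ q = 0

namespace IsMOrthonormalFrame

section Rectangular

variable {n m : ℕ} {A M : Matrix (Fin n) (Fin n) ℝ} {q : Fin n → ℝ} {Q : Matrix (Fin n) (Fin m) ℝ}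

lemma posDef_transpose_mul_mul (h : IsMOrthonormalFrame M q Q) (hA : A.PosDef) :
    (Qᵀ * A * Q).PosDef := by
  rw [← conjTranspose_eq_transpose_of_trivial]
  refine hA.conjTranspose_mul_mul_same fun x y hxy => ?_
  rw [← one_mulVec x, ← one_mulVec y, ← h.transpose_mul_mul, ← mulVec_mulVec x, ← mulVec_mulVec y,
    hxy]

lemma Rq_self (h : IsMOrthonormalFrame M q Q) (A : Matrix (Fin n) (Fin n) ℝ) :
    Rq A M q = q ⬝ᵥ (A *ᵥ q) := by
  rw [Rq, h.dotProduct_self, div_one]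

lemma transpose_mulVec_add_smul (h : IsMOrthonormalFrame M q Q) (y : Fin m → ℝ) (t : ℝ) :
    (Qᵀ * M) *ᵥ (Q *ᵥ y + t • q) = y := by
  rw [mulVec_add, mulVec_mulVec, h.transpose_mul_mul, one_mulVec, mulVec_smul,
    h.transpose_mulVec, smul_zero, add_zero]

lemma dotProduct_mulVec_add_smul (h : IsMOrthonormalFrame M q Q) (hM : M.IsHermitian)
    (y : Fin m → ℝ) (t : ℝ) : q ⬝ᵥ (M *ᵥ (Q *ᵥ y + t • q)) = t := by
  rw [dotProduct_mulVec_comm_of_isHermitian hM, add_dotProduct, mulVec_dotProduct_mulVec,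
    h.transpose_mulVec, dotProduct_zero, zero_add, smul_dotProduct, h.dotProduct_self, smul_eq_mul,
    mul_one]

lemma quadForm_mulVec_add_self (h : IsMOrthonormalFrame M q Q) (hM : M.IsHermitian)
    (y : Fin m → ℝ) : (Q *ᵥ y + q) ⬝ᵥ (M *ᵥ (Q *ᵥ y + q)) = y ⬝ᵥ y + 1 := by
  rw [quadForm_mulVec_add hM, h.transpose_mul_mul, h.transpose_mulVec, h.dotProduct_self,
    one_mulVec, dotProduct_zero, mul_zero, add_zero]

lemma phiAux_eq_Rq (h : IsMOrthonormalFrame M q Q) (hA : A.IsHermitian) (hM : M.IsHermitian)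
    (y : Fin m → ℝ) :
    phiAux (Qᵀ * A * Q) ((Qᵀ * A) *ᵥ q) (Rq A M q) y = Rq A M (Q *ᵥ y + q) := by
  rw [phiAux, h.Rq_self, ← quadForm_mulVec_add hA, ← h.quadForm_mulVec_add_self hM, Rq]

lemma one_le_quadForm_mulVec_add (h : IsMOrthonormalFrame M q Q) (hM : M.IsHermitian)
    (y : Fin m → ℝ) : 1 ≤ (Q *ᵥ y + q) ⬝ᵥ (M *ᵥ (Q *ᵥ y + q)) := by
  rw [h.quadForm_mulVec_add_self hM]
  simpa using dotProduct_star_self_nonneg y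

lemma Mnorm_mulVec_add_pos (h : IsMOrthonormalFrame M q Q) (hM : M.IsHermitian)
    (y : Fin m → ℝ) : 0 < Mnorm M (Q *ᵥ y + q) :=
  Real.sqrt_pos.mpr (one_pos.trans_le (h.one_le_quadForm_mulVec_add hM y))

lemma dotProduct_mulVec_psiDag (h : IsMOrthonormalFrame M q Q) (hM : M.IsHermitian)
    (y : Fin m → ℝ) : q ⬝ᵥ (M *ᵥ psiDag M q Q y) = (Mnorm M (Q *ᵥ y + q))⁻¹ := by
  have hone : q ⬝ᵥ (M *ᵥ (Q *ᵥ y + q)) = 1 := by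
    simpa only [one_smul] using h.dotProduct_mulVec_add_smul hM y 1
  rw [psiDag, mulVec_smul, dotProduct_smul, hone, smul_eq_mul, mul_one]

lemma psiMap_psiDag (h : IsMOrthonormalFrame M q Q) (hM : M.IsHermitian) (y : Fin m → ℝ) :
    psiMap M q Q (psiDag M q Q y) = y := by
  have hcoord : (Qᵀ * M) *ᵥ (Q *ᵥ y + q) = y := by
    simpa only [one_smul] using h.transpose_mulVec_add_smul y 1
  rw [psiMap, h.dotProduct_mulVec_psiDag hM, inv_inv, psiDag, mulVec_smul,
    smul_inv_smul₀ (h.Mnorm_mulVec_add_pos hM y).ne', hcoord]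

lemma psiDag_mem_Splus (h : IsMOrthonormalFrame M q Q) (hM : M.IsHermitian) (y : Fin m → ℝ) :
    psiDag M q Q y ∈ Splus M q := by
  have hpos := h.Mnorm_mulVec_add_pos hM y
  constructor
  · rw [psiDag, Mnorm_smul, abs_of_pos (inv_pos.mpr hpos), inv_mul_cancel₀ hpos.ne']
  · rw [h.dotProduct_mulVec_psiDag hM]
    exact inv_pos.mpr hpos

lemma mem_image_psiMap_Xset (h : IsMOrthonormalFrame M q Q) (hM : M.IsHermitian)
    {y : Fin m → ℝ} (hy : Rq A M (Q *ᵥ y + q) ≤ Rq A M q) :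
    y ∈ psiMap M q Q '' Xset A M q := by
  refine ⟨psiDag M q Q y, ⟨h.psiDag_mem_Splus hM y, ?_⟩, h.psiMap_psiDag hM y⟩
  rwa [psiDag, Rq_smul A M (inv_ne_zero (h.Mnorm_mulVec_add_pos hM y).ne')]

end Rectangular

section Square

variable {m : ℕ} {A M : Matrix (Fin (m + 1)) (Fin (m + 1)) ℝ} {q : Fin (m + 1) → ℝ}
  {Q : Matrix (Fin (m + 1)) (Fin m) ℝ} {P : Matrix (Fin m) (Fin m) ℝ} {u : Fin (m + 1) → ℝ}
  {μ Λ ξ : ℝ}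

lemma eq_mulVec_add_smul (h : IsMOrthonormalFrame M q Q) (hM : M.IsHermitian)
    (x : Fin (m + 1) → ℝ) : x = Q *ᵥ ((Qᵀ * M) *ᵥ x) + (q ⬝ᵥ (M *ᵥ x)) • q := by
  let T := Q.mulVecLin.coprod (LinearMap.toSpanSingleton ℝ _ q)
  have hT (y : Fin m → ℝ) (t : ℝ) : T (y, t) = Q *ᵥ y + t • q := rfl
  have hinj : Function.Injective T := by
    refine Function.LeftInverse.injective (g := fun x => ((Qᵀ * M) *ᵥ x, q ⬝ᵥ (M *ᵥ x))) ?_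
    rintro ⟨y, t⟩
    simp only [hT, h.transpose_mulVec_add_smul, h.dotProduct_mulVec_add_smul hM]
  have hsurj : Function.Surjective T :=
    (LinearMap.injective_iff_surjective_of_finrank_eq_finrank (by simp)).mp hinj
  obtain ⟨⟨y, t⟩, rfl⟩ := hsurj x
  rw [hT, h.transpose_mulVec_add_smul, h.dotProduct_mulVec_add_smul hM]

lemma mulVec_psiMap_add (h : IsMOrthonormalFrame M q Q) (hM : M.IsHermitian)
    {x : Fin (m + 1) → ℝ} (hx : q ⬝ᵥ (M *ᵥ x) ≠ 0) :
    Q *ᵥ psiMap M q Q x + q = (q ⬝ᵥ (M *ᵥ x))⁻¹ • x := by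
  rw [eq_inv_smul_iff₀ hx, psiMap, mulVec_smul, smul_add, smul_inv_smul₀ hx,
    ← h.eq_mulVec_add_smul hM]

lemma phiAux_sub_eigenvalue (h : IsMOrthonormalFrame M q Q) (hA : A.IsHermitian)
    (hM : M.IsHermitian) (heig : A *ᵥ u = μ • (M *ᵥ u)) (hqu : q ⬝ᵥ (M *ᵥ u) ≠ 0)
    (y : Fin m → ℝ) :
    phiAux (Qᵀ * A * Q) ((Qᵀ * A) *ᵥ q) (Rq A M q) y - μ =
      ((Q *ᵥ (y - psiMap M q Q u)) ⬝ᵥ (A *ᵥ (Q *ᵥ (y - psiMap M q Q u))) -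
        μ * ((Q *ᵥ (y - psiMap M q Q u)) ⬝ᵥ (M *ᵥ (Q *ᵥ (y - psiMap M q Q u))))) /
      (y ⬝ᵥ y + 1) := by
  have hw : A *ᵥ (Q *ᵥ psiMap M q Q u + q) = μ • (M *ᵥ (Q *ᵥ psiMap M q Q u + q)) := by
    rw [h.mulVec_psiMap_add hM hqu, mulVec_smul, mulVec_smul, heig, smul_comm]
  have hsplit : Q *ᵥ (y - psiMap M q Q u) + (Q *ᵥ psiMap M q Q u + q) = Q *ᵥ y + q := by
    rw [← add_assoc, ← mulVec_add, sub_add_cancel]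
  have hne : (Q *ᵥ y + q) ⬝ᵥ (M *ᵥ (Q *ᵥ y + q)) ≠ 0 :=
    (one_pos.trans_le (h.one_le_quadForm_mulVec_add hM y)).ne'
  rw [← quadForm_add_eigenvector hA hM hw, hsplit, h.phiAux_eq_Rq hA hM, Rq_sub hne,
    h.quadForm_mulVec_add_self hM]

lemma phiAux_psiMap_eigenvector (h : IsMOrthonormalFrame M q Q) (hA : A.IsHermitian)
    (hM : M.IsHermitian) (heig : A *ᵥ u = μ • (M *ᵥ u)) (hqu : q ⬝ᵥ (M *ᵥ u) ≠ 0) :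
    phiAux (Qᵀ * A * Q) ((Qᵀ * A) *ᵥ q) (Rq A M q) (psiMap M q Q u) = μ := by
  rw [← sub_eq_zero, h.phiAux_sub_eigenvalue hA hM heig hqu]
  simp

lemma phiAux_sub_eigenvalue_le (h : IsMOrthonormalFrame M q Q) (hA : A.IsHermitian)
    (hM : M.PosDef) (hP : P.PosDef) (heig : A *ᵥ u = μ • (M *ᵥ u)) (hμ : 0 ≤ μ)
    (hqu : q ⬝ᵥ (M *ᵥ u) ≠ 0) (hΛ : Λ ∈ upperBounds (pencilSpectrum A M)) (hΛ₀ : 0 < Λ)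
    (hξ : ξ ∈ upperBounds (pencilSpectrum (Qᵀ * A * Q) P)) (hξ₀ : 0 ≤ ξ) (y : Fin m → ℝ) :
    phiAux (Qᵀ * A * Q) ((Qᵀ * A) *ᵥ q) (Rq A M q) y - μ ≤
      ξ * (1 - μ / Λ) * ((y - psiMap M q Q u) ⬝ᵥ (P *ᵥ (y - psiMap M q Q u))) := by
  rw [h.phiAux_sub_eigenvalue hA hM.isHermitian heig hqu]
  set d := y - psiMap M q Q u
  have hd : 0 ≤ d ⬝ᵥ (P *ᵥ d) := by simpa using hP.posSemidef.dotProduct_mulVec_nonneg d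
  have hB : (Qᵀ * A * Q).IsHermitian := by
    simpa only [conjTranspose_eq_transpose_of_trivial] using isHermitian_conjTranspose_mul_mul Q hA
  have hμΛ : 0 ≤ 1 - μ / Λ := by
    have hu : u ≠ 0 := by
      rintro rfl
      simp at hqu
    exact sub_nonneg.mpr (div_le_one_of_le₀ (hΛ ⟨u, hu, heig⟩) hΛ₀.le)
  have hnum : (Q *ᵥ d) ⬝ᵥ (A *ᵥ (Q *ᵥ d)) - μ * ((Q *ᵥ d) ⬝ᵥ (M *ᵥ (Q *ᵥ d))) ≤
      ξ * (1 - μ / Λ) * (d ⬝ᵥ (P *ᵥ d)) := calc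
    _ ≤ (1 - μ / Λ) * (d ⬝ᵥ ((Qᵀ * A * Q) *ᵥ d)) :=
      mulVec_dotProduct_mulVec_mulVec Q A d d ▸ quadForm_sub_le hA hM hΛ hΛ₀ hμ (Q *ᵥ d)
    _ ≤ (1 - μ / Λ) * (ξ * (d ⬝ᵥ (P *ᵥ d))) := by
      gcongr
      exact dotProduct_mulVec_le_of_mem_upperBounds_pencilSpectrum hB hP hξ d
    _ = ξ * (1 - μ / Λ) * (d ⬝ᵥ (P *ᵥ d)) := by ring
  have hden : 1 ≤ y ⬝ᵥ y + 1 := by simpa using dotProduct_star_self_nonneg y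
  exact div_le_of_le_mul₀ (by positivity) (by positivity)
    (hnum.trans (le_mul_of_one_le_right (by positivity) hden))

end Square

end IsMOrthonormalFrame

theorem stmt_10_general {m : ℕ} {A M : Matrix (Fin (m + 1)) (Fin (m + 1)) ℝ}
    {P : Matrix (Fin m) (Fin m) ℝ} {q u : Fin (m + 1) → ℝ} {Q : Matrix (Fin (m + 1)) (Fin m) ℝ}
    {μ Λ ξ L : ℝ} (hA : A.IsHermitian) (hM : M.PosDef) (hP : P.PosDef)
    (hqQ : IsMOrthonormalFrame M q Q) (heig : A *ᵥ u = μ • (M *ᵥ u)) (hμ : 0 ≤ μ)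
    (hqu : q ⬝ᵥ (M *ᵥ u) ≠ 0) (hΛ : Λ ∈ upperBounds (pencilSpectrum A M)) (hμΛ : μ < Λ)
    (hξ : ξ ∈ upperBounds (pencilSpectrum (Qᵀ * A * Q) P)) (hξ₀ : 0 < ξ)
    (hL : 2 * ξ * (1 - μ / Λ) ≤ L) :
    phiAux (Qᵀ * A * Q) ((Qᵀ * A) *ᵥ q) (Rq A M q) (psiMap M q Q u) = μ ∧
    (∀ y, phiAux (Qᵀ * A * Q) ((Qᵀ * A) *ᵥ q) (Rq A M q) y - μ ≤
      L / 2 * ((y - psiMap M q Q u) ⬝ᵥ (P *ᵥ (y - psiMap M q Q u)))) ∧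
    (∀ y, (y - psiMap M q Q u) ⬝ᵥ (P *ᵥ (y - psiMap M q Q u)) ≤ 2 * (Rq A M q - μ) / L →
      y ∈ psiMap M q Q '' Xset A M q) := by
  have hΛ₀ : 0 < Λ := hμ.trans_lt hμΛ
  have hL₀ : 0 < L := by
    have hgap := sub_pos.mpr ((div_lt_one hΛ₀).mpr hμΛ)
    exact hL.trans_lt' (by positivity)
  have hquad (y : Fin m → ℝ) : phiAux (Qᵀ * A * Q) ((Qᵀ * A) *ᵥ q) (Rq A M q) y - μ ≤
      L / 2 * ((y - psiMap M q Q u) ⬝ᵥ (P *ᵥ (y - psiMap M q Q u))) := by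
    refine (hqQ.phiAux_sub_eigenvalue_le hA hM hP heig hμ hqu hΛ hΛ₀ hξ hξ₀.le y).trans ?_
    gcongr
    · simpa using hP.posSemidef.dotProduct_mulVec_nonneg (y - psiMap M q Q u)
    · linarith
  refine ⟨hqQ.phiAux_psiMap_eigenvector hA hM.isHermitian heig hqu, hquad, fun y hy => ?_⟩
  apply hqQ.mem_image_psiMap_Xset hM.isHermitian
  rw [← hqQ.phiAux_eq_Rq hA hM.isHermitian]
  rw [le_div_iff₀ hL₀] at hy
  linarith [hquad y]

/-- Under λ₁ ≤ ρ_q < λ₁ + (λ₂−λ₁)/(2+χ_P), with y* = ψ(u₁) (so φ(y*) = λ₁):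
(i) for any y ∈ Y, φ(y) − λ₁ ≤ (L_P/2)‖y − y*‖²_P;
(ii) conversely, if ‖y − y*‖²_P ≤ 2(ρ_q − λ₁)/L_P then y ∈ Y. -/
theorem stmt_10 (n : ℕ)
    (A M : Matrix (Fin (n+2)) (Fin (n+2)) ℝ)
    (hA : A.PosDef) (hM : M.PosDef)
    (q : Fin (n+2) → ℝ) (Q : Matrix (Fin (n+2)) (Fin (n+1)) ℝ)
    (hq1 : q ⬝ᵥ (M *ᵥ q) = 1)
    (hQMQ : Qᵀ * M * Q = 1)
    (hQMq : (Qᵀ * M) *ᵥ q = 0)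
    (lam : Fin (n+2) → ℝ) (u : Fin (n+2) → Fin (n+2) → ℝ)
    (hlam0 : 0 < lam 0) (hlam01 : lam 0 < lam 1) (hmono : Monotone lam)
    (heig : ∀ i, A *ᵥ u i = lam i • (M *ᵥ u i))
    (horth : ∀ i j, u i ⬝ᵥ (M *ᵥ u j) = if i = j then (1:ℝ) else 0)
    (hqu1 : 0 < q ⬝ᵥ (M *ᵥ u 0))
    (B : Matrix (Fin (n+1)) (Fin (n+1)) ℝ) (hB : B = Qᵀ * A * Q)
    (b : Fin (n+1) → ℝ) (hb : b = (Qᵀ * A) *ᵥ q)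
    (ρq : ℝ) (hρq : ρq = Rq A M q)
    (P : Matrix (Fin (n+1)) (Fin (n+1)) ℝ) (hP : P.PosDef)
    (ximin ximax : ℝ)
    (hximin : IsLeast {ξ : ℝ | ∃ v : Fin (n+1) → ℝ, v ≠ 0 ∧ B *ᵥ v = ξ • (P *ᵥ v)} ximin)
    (hximax : IsGreatest {ξ : ℝ | ∃ v : Fin (n+1) → ℝ, v ≠ 0 ∧ B *ᵥ v = ξ • (P *ᵥ v)} ximax)
    (χP : ℝ)
    (hχP : χP = (8 * lam 1 / lam 0) * (ximax / ximin) *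
      Real.sqrt ((lam 1 + lam 0) / (2 * (lam 1 - lam 0))))
    (LP : ℝ)
    (hLP : LP = 2 * ximax * (1 - lam 0 / lam (Fin.last (n+1)) +
      (χP / lam 1) * (ximin / ximax) * (ρq - lam 0)))
    (hρ1 : lam 0 ≤ ρq) (hρ2 : ρq < lam 0 + (lam 1 - lam 0) / (2 + χP))
    (ystar : Fin (n+1) → ℝ) (hystar : ystar = psiMap M q Q (u 0)) :
    phiAux B b ρq ystar = lam 0 ∧
    (∀ y ∈ psiMap M q Q '' (Xset A M q),
      phiAux B b ρq y - lam 0 ≤ LP / 2 * ((y - ystar) ⬝ᵥ (P *ᵥ (y - ystar)))) ∧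
    (∀ y : Fin (n+1) → ℝ,
      (y - ystar) ⬝ᵥ (P *ᵥ (y - ystar)) ≤ 2 * (ρq - lam 0) / LP →
        y ∈ psiMap M q Q '' (Xset A M q)) := by
  subst hB hb hρq hystar
  have hqQ : IsMOrthonormalFrame M q Q := ⟨hq1, hQMQ, hQMq⟩
  have hB : (Qᵀ * A * Q).PosDef := hqQ.posDef_transpose_mul_mul hA
  have hximin₀ : 0 < ximin := pos_of_mem_pencilSpectrum hB hP.posSemidef hximin.1
  have hximax₀ : 0 < ximax := pos_of_mem_pencilSpectrum hB hP.posSemidef hximax.1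
  have hlam1 : 0 < lam 1 := hlam0.trans hlam01
  have hlast : lam 0 < lam (Fin.last (n + 1)) := hlam01.trans_le (hmono (Fin.le_last 1))
  have hΛ := last_mem_upperBounds_pencilSpectrum hA.isHermitian hM.isHermitian hmono heig horth
  have hL : 2 * ximax * (1 - lam 0 / lam (Fin.last (n + 1))) ≤ LP := by
    rw [hLP, hχP]
    gcongr
    exact le_add_of_nonneg_right (mul_nonneg (by positivity) (sub_nonneg.mpr hρ1))
  obtain ⟨hstar, hle, hmem⟩ := stmt_10_general hA.isHermitian hM hP hqQ (heig 0) hlam0.le hqu1.ne'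
    hΛ hlast hximax.2 hximax₀ hL
  exact ⟨hstar, fun y _ => hle y, hmem⟩
end

section
/- Under the assumptions of the LONAG containment-and-convergence theorem (φ (μ,L)-strongly convex on 𝒴 with minimizer y*, ∇φ(y*) = 0, gradient bounds μ‖y₁−y₂‖ ≤ ‖∇φ(y₁)−∇φ(y₂)‖ ≤ L‖y₁−y₂‖ on 𝒴, step-size 0 < τ ≤ (μ/L)^{−1/2·(−1)} i.e. 0 < τ ≤ κ^{−1/2} with κ = L/μ, and initials satisfying s₀ ∈ B_{R₁} and {y : φ(y) ≤ φ(y₀)} ⊆ B_{R₁} ⊆ B_{R₂} ⊆ 𝒴 with R₁ = (2ℒ₀/μ)^{1/2}, R₂ = max{2R₁,(1+τκ)R₁}), the LONAG iterates satisfy φ(y_k) ≤ φ(y_{k−1}) ≤ … ≤ φ(y₀) and φ(y_k) − φ(y*) ≤ (1 − τ)^k ℒ₀ for all k ≥ 0, where ℒ₀ = φ(y₀) − φ(y*) + (μ/2)‖s₀ − y*‖². -/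
open RealInnerProductSpace

/-!
Along the iterates the Lyapunov function `V (y, s) = φ y - φ y* + μ / 2 * ‖s - y*‖ ^ 2` contracts
by the factor `1 - τ`. The choice of `ȳ` makes the weighted sum of the two tangent inequalities at
`ȳ`, tested at `y` (weight `1 - τ`) and at `y*` (weight `τ`), produce exactly the inner product that
appears on expanding `‖s₊ - y*‖ ^ 2`. The only surplus is `τ ^ 2 / (2 * μ) * ‖∇φ ȳ‖ ^ 2`, which the
gradient step `ȳ - L⁻¹ • ∇φ ȳ` pays for when `τ ^ 2 * L ≤ μ`.

The inequalities are only available on `Y`, so containment is proved along with the contraction: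
`V ≤ V₀` keeps `y`, `s` and hence `ȳ` in the ball of radius `R = √(2 * V₀ / μ)` about `y*`, and
there `‖∇φ‖ ≤ L * R`, so the gradient step stays in the ball of radius `2 * R`.
-/

open Metric

section LONAG

variable {E : Type*} [NormedAddCommGroup E] [InnerProductSpace ℝ E]
  {φ : E → ℝ} {g : E → E} {Y : Set E} {μ L τ R : ℝ} {p x : E} {y ybar s : ℕ → E}

theorem le_sqrt_of_half_mul_sq_le {r C : ℝ} (hμ : 0 < μ) (h : μ / 2 * r ^ 2 ≤ C) :
    r ≤ √(2 * C / μ) := by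
  refine Real.le_sqrt_of_sq_le ((le_div_iff₀ hμ).2 ?_)
  linarith

theorem sq_le_inv_of_le_rpow_neg_half {t c : ℝ} (ht : 0 ≤ t) (hc : 0 ≤ c)
    (h : t ≤ c ^ (-(1 / 2 : ℝ))) : t ^ 2 ≤ c⁻¹ := calc
  t ^ 2 ≤ (c ^ (-(1 / 2 : ℝ))) ^ 2 := by gcongr
  _ = c⁻¹ := by rw [Real.rpow_neg hc, ← Real.sqrt_eq_rpow, inv_pow, Real.sq_sqrt hc]

/-- The lower half of `(μ, L)`-strong convexity of `φ` on `Y`. The map `g` plays the role of `∇φ`;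
keeping it abstract makes sense of the notion without completeness of `E`. -/
def StrongConvexWithGradOn (φ : E → ℝ) (g : E → E) (μ : ℝ) (Y : Set E) : Prop :=
  ∀ y₁ ∈ Y, ∀ y₂ ∈ Y, μ / 2 * ‖y₁ - y₂‖ ^ 2 ≤ φ y₁ - φ y₂ - ⟪g y₂, y₁ - y₂⟫

/-- The upper half of `(μ, L)`-strong convexity of `φ` on `Y`, with `g` in the role of `∇φ`. -/
def SmoothWithGradOn (φ : E → ℝ) (g : E → E) (L : ℝ) (Y : Set E) : Prop :=
  ∀ y₁ ∈ Y, ∀ y₂ ∈ Y, φ y₁ - φ y₂ - ⟪g y₂, y₁ - y₂⟫ ≤ L / 2 * ‖y₁ - y₂‖ ^ 2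

/-- The LONAG recursions for the objective `φ`, with `g` in the role of `∇φ`. -/
structure IsLONAG (φ : E → ℝ) (g : E → E) (μ τ : ℝ) (y ybar s : ℕ → E) : Prop where
  ybar_eq : ∀ k, ybar k = (1 + τ)⁻¹ • (y k + τ • s k)
  s_succ : ∀ k, s (k + 1) = (1 - τ) • s k + τ • ybar k - (τ / μ) • g (ybar k)
  y_succ : ∀ k, y (k + 1) ∈ Submodule.span ℝ {y k, ybar k, g (ybar k)} ∧
    ∀ v ∈ Submodule.span ℝ {y k, ybar k, g (ybar k)}, φ (y (k + 1)) ≤ φ v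

/-- The Lyapunov function of the method at the state `(a, b)`, relative to the minimizer `p`; the
paper's `ℒ₀` is its value at `(y₀, s₀)`. -/
noncomputable def lyapunov (φ : E → ℝ) (μ : ℝ) (p a b : E) : ℝ :=
  φ a - φ p + μ / 2 * ‖b - p‖ ^ 2

namespace StrongConvexWithGradOn

theorem mul_norm_sq_le_sub_of_grad_eq_zero (h : StrongConvexWithGradOn φ g μ Y) (hx : x ∈ Y)
    (hp : p ∈ Y) (hgp : g p = 0) : μ / 2 * ‖x - p‖ ^ 2 ≤ φ x - φ p := by
  simpa [hgp] using h x hx p hp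

theorem isMinOn_of_grad_eq_zero (h : StrongConvexWithGradOn φ g μ Y) (hμ : 0 ≤ μ) (hp : p ∈ Y)
    (hgp : g p = 0) : IsMinOn φ Y p := fun x hx ↦ by
  have hgrowth := h.mul_norm_sq_le_sub_of_grad_eq_zero hx hp hgp
  have : 0 ≤ μ / 2 * ‖x - p‖ ^ 2 := by positivity
  exact (by linarith : φ p ≤ φ x)

/-- The hypothesis `a - x = τ • (x - b)` says that `x` is the LONAG average of `a` and `b`. -/
theorem sub_mul_inner_le_convexCombo (h : StrongConvexWithGradOn φ g μ Y) (hμ : 0 ≤ μ)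
    (hτ0 : 0 ≤ τ) (hτ1 : τ ≤ 1) {a b : E} (hx : x ∈ Y) (ha : a ∈ Y) (hp : p ∈ Y)
    (hax : a - x = τ • (x - b)) :
    φ x + τ * (μ / 2 * ‖x - p‖ ^ 2) - τ * ⟪g x, (1 - τ) • b + τ • x - p⟫ ≤
      (1 - τ) * φ a + τ * φ p := by
  have tangent_a : 0 ≤ φ a - φ x - ⟪g x, a - x⟫ :=
    le_trans (by positivity) (h a ha x hx)
  have tangent_p : μ / 2 * ‖x - p‖ ^ 2 ≤ φ p - φ x - ⟪g x, p - x⟫ := by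
    simpa only [norm_sub_rev] using h p hp x hx
  have weighted_a := mul_nonneg (sub_nonneg.2 hτ1) tangent_a
  have weighted_p := mul_le_mul_of_nonneg_left tangent_p hτ0
  have directions : (1 - τ) * ⟪g x, a - x⟫ + τ * ⟪g x, p - x⟫ =
      -(τ * ⟪g x, (1 - τ) • b + τ • x - p⟫) := by
    rw [hax]
    simp only [← real_inner_smul_right, ← inner_add_right, ← inner_neg_right]
    congr 1
    module
  linarith

end StrongConvexWithGradOn

namespace SmoothWithGradOn

theorem sub_le_mul_norm_sq_of_grad_eq_zero (h : SmoothWithGradOn φ g L Y) (hx : x ∈ Y)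
    (hp : p ∈ Y) (hgp : g p = 0) : φ x - φ p ≤ L / 2 * ‖x - p‖ ^ 2 := by
  simpa [hgp] using h x hx p hp

theorem apply_sub_smul_grad_le (h : SmoothWithGradOn φ g L Y) {t : ℝ} (hx : x ∈ Y)
    (hstep : x - t • g x ∈ Y) :
    φ (x - t • g x) ≤ φ x - (t - L / 2 * t ^ 2) * ‖g x‖ ^ 2 := by
  have hup := h _ hstep x hx
  rw [sub_sub_cancel_left, norm_neg, inner_neg_right, real_inner_smul_right,
    real_inner_self_eq_norm_sq, norm_smul, mul_pow, Real.norm_eq_abs, sq_abs] at hup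
  linarith

/-- Moving from `x` by the distance `R` along `-g x` cannot go below `φ p`. -/
theorem norm_grad_le (h : SmoothWithGradOn φ g L Y) (hL : 0 ≤ L) (hball : closedBall p (2 * R) ⊆ Y)
    (hmin : IsMinOn φ Y p) (hgp : g p = 0) (hx : ‖x - p‖ ≤ R) : ‖g x‖ ≤ L * R := by
  have hR : 0 ≤ R := (norm_nonneg _).trans hx
  have hpY : p ∈ Y := hball (mem_closedBall_self (by positivity))
  have hxY : x ∈ Y := hball (mem_closedBall_iff_norm.2 (by linarith))
  rcases hR.eq_or_lt with rfl | hR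
  · have hxp : x = p := by simpa [sub_eq_zero] using hx
    simp [hxp, hgp]
  rcases (norm_nonneg (g x)).eq_or_lt with hg | hg
  · rw [← hg]
    positivity
  have hz : x - (R / ‖g x‖) • g x ∈ Y := hball <| mem_closedBall_iff_norm.2 <| calc
    ‖x - (R / ‖g x‖) • g x - p‖ = ‖(x - p) - (R / ‖g x‖) • g x‖ := by rw [sub_right_comm]
    _ ≤ ‖x - p‖ + ‖(R / ‖g x‖) • g x‖ := norm_sub_le _ _
    _ = ‖x - p‖ + R := by
      rw [norm_smul, Real.norm_of_nonneg (by positivity), div_mul_cancel₀ _ hg.ne']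
    _ ≤ 2 * R := by linarith
  have hdescent : φ p ≤ φ x - (R * ‖g x‖ - L / 2 * R ^ 2) := calc
    φ p ≤ φ (x - (R / ‖g x‖) • g x) := hmin hz
    _ ≤ _ := h.apply_sub_smul_grad_le hxY hz
    _ = φ x - (R * ‖g x‖ - L / 2 * R ^ 2) := by field_simp
  have hgrowth : φ x - φ p ≤ L / 2 * R ^ 2 :=
    (h.sub_le_mul_norm_sq_of_grad_eq_zero hxY hpY hgp).trans (by gcongr)
  exact le_of_mul_le_mul_left (by linarith : R * ‖g x‖ ≤ R * (L * R)) hR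

theorem apply_gradientStep_le (h : SmoothWithGradOn φ g L Y) (hL : 0 < L)
    (hball : closedBall p (2 * R) ⊆ Y) (hmin : IsMinOn φ Y p) (hgp : g p = 0)
    (hx : ‖x - p‖ ≤ R) : φ (x - L⁻¹ • g x) ≤ φ x - 1 / (2 * L) * ‖g x‖ ^ 2 := by
  have hstep : ‖L⁻¹ • g x‖ ≤ R := by
    rw [norm_smul, Real.norm_of_nonneg (by positivity), inv_mul_le_iff₀ hL]
    exact h.norm_grad_le hL.le hball hmin hgp hx
  have hxY : x ∈ Y :=
    hball (mem_closedBall_iff_norm.2 (by linarith [norm_nonneg (x - p)]))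
  have hzY : x - L⁻¹ • g x ∈ Y := hball <| mem_closedBall_iff_norm.2 <| by
    rw [sub_right_comm]
    linarith [norm_sub_le (x - p) (L⁻¹ • g x)]
  convert h.apply_sub_smul_grad_le hxY hzY using 3
  field_simp
  norm_num

end SmoothWithGradOn

theorem norm_sq_convexCombo_le (hτ0 : 0 ≤ τ) (hτ1 : τ ≤ 1) (a b : E) :
    ‖(1 - τ) • a + τ • b‖ ^ 2 ≤ (1 - τ) * ‖a‖ ^ 2 + τ * ‖b‖ ^ 2 :=
  (convexOn_univ_norm.pow (fun _ _ ↦ norm_nonneg _) 2).2 (Set.mem_univ a) (Set.mem_univ b)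
    (sub_nonneg.2 hτ1) hτ0 (sub_add_cancel 1 τ)

theorem mul_norm_sq_convexCombo_sub_smul_le (hμ : 0 < μ) (hτ0 : 0 ≤ τ) (hτ1 : τ ≤ 1)
    (b x v p : E) :
    μ / 2 * ‖(1 - τ) • b + τ • x - (τ / μ) • v - p‖ ^ 2 ≤
      (1 - τ) * (μ / 2 * ‖b - p‖ ^ 2) + τ * (μ / 2 * ‖x - p‖ ^ 2)
        - τ * ⟪v, (1 - τ) • b + τ • x - p⟫ + τ ^ 2 / (2 * μ) * ‖v‖ ^ 2 := by
  set w := (1 - τ) • b + τ • x - p with hw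
  have hconvex : ‖w‖ ^ 2 ≤ (1 - τ) * ‖b - p‖ ^ 2 + τ * ‖x - p‖ ^ 2 := by
    convert norm_sq_convexCombo_le hτ0 hτ1 (b - p) (x - p) using 3
    rw [hw]
    module
  calc
    μ / 2 * ‖(1 - τ) • b + τ • x - (τ / μ) • v - p‖ ^ 2
      = μ / 2 * ‖w - (τ / μ) • v‖ ^ 2 := by rw [sub_right_comm]
    _ = μ / 2 * ‖w‖ ^ 2 - τ * ⟪v, w⟫ + τ ^ 2 / (2 * μ) * ‖v‖ ^ 2 := by
      rw [norm_sub_sq_real, real_inner_smul_right, real_inner_comm, norm_smul, mul_pow,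
        Real.norm_eq_abs, sq_abs]
      field_simp
    _ ≤ μ / 2 * ((1 - τ) * ‖b - p‖ ^ 2 + τ * ‖x - p‖ ^ 2) - τ * ⟪v, w⟫
        + τ ^ 2 / (2 * μ) * ‖v‖ ^ 2 := by gcongr
    _ = _ := by ring

namespace IsLONAG

theorem apply_succ_le (h : IsLONAG φ g μ τ y ybar s) (k : ℕ) : φ (y (k + 1)) ≤ φ (y k) :=
  (h.y_succ k).2 _ (Submodule.subset_span (by simp))

theorem apply_succ_le_gradientStep (h : IsLONAG φ g μ τ y ybar s) (t : ℝ) (k : ℕ) :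
    φ (y (k + 1)) ≤ φ (ybar k - t • g (ybar k)) :=
  (h.y_succ k).2 _ (sub_mem (Submodule.subset_span (by simp))
    (Submodule.smul_mem _ _ (Submodule.subset_span (by simp))))

theorem sub_ybar (h : IsLONAG φ g μ τ y ybar s) (hτ : 0 < τ) (k : ℕ) :
    y k - ybar k = τ • (ybar k - s k) := by
  have hsum : (1 + τ) • ybar k = y k + τ • s k := by
    rw [h.ybar_eq, smul_inv_smul₀ (by positivity)]
  calc
    y k - ybar k = (y k + τ • s k) - τ • s k - ybar k := by module
    _ = τ • (ybar k - s k) := by rw [← hsum]; module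

theorem ybar_mem_closedBall (h : IsLONAG φ g μ τ y ybar s) (hτ : 0 < τ) {k : ℕ}
    (hy : y k ∈ closedBall p R) (hs : s k ∈ closedBall p R) : ybar k ∈ closedBall p R := by
  have hcombo := convex_closedBall p R hy hs (by positivity : 0 ≤ (1 + τ)⁻¹)
    (by positivity : 0 ≤ (1 + τ)⁻¹ * τ) (by field_simp)
  rwa [h.ybar_eq, smul_add, smul_smul]

theorem lyapunov_succ_le (h : IsLONAG φ g μ τ y ybar s) (hlow : StrongConvexWithGradOn φ g μ Y)
    (hμ : 0 < μ) (hL : 0 < L) (hτ0 : 0 < τ) (hτ1 : τ ≤ 1) (hτL : τ ^ 2 * L ≤ μ) {k : ℕ}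
    (hy : y k ∈ Y) (hybar : ybar k ∈ Y) (hp : p ∈ Y)
    (hdescent : φ (ybar k - L⁻¹ • g (ybar k)) ≤ φ (ybar k) - 1 / (2 * L) * ‖g (ybar k)‖ ^ 2) :
    lyapunov φ μ p (y (k + 1)) (s (k + 1)) ≤ (1 - τ) * lyapunov φ μ p (y k) (s k) := by
  have hstep := h.apply_succ_le_gradientStep L⁻¹ k
  have hdual := mul_norm_sq_convexCombo_sub_smul_le hμ hτ0.le hτ1 (s k) (ybar k) (g (ybar k)) p
  have htangent := hlow.sub_mul_inner_le_convexCombo hμ.le hτ0.le hτ1 hybar hy hp (h.sub_ybar hτ0 k)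
  have hsurplus : τ ^ 2 / (2 * μ) * ‖g (ybar k)‖ ^ 2 ≤ 1 / (2 * L) * ‖g (ybar k)‖ ^ 2 := by
    refine mul_le_mul_of_nonneg_right ?_ (by positivity)
    rw [div_le_div_iff₀ (by positivity) (by positivity)]
    linarith
  rw [lyapunov, lyapunov, h.s_succ]
  linarith

theorem lyapunov_le (h : IsLONAG φ g μ τ y ybar s) (hlow : StrongConvexWithGradOn φ g μ Y)
    (hup : SmoothWithGradOn φ g L Y) (hμ : 0 < μ) (hL : 0 < L) (hτ0 : 0 < τ) (hτ1 : τ ≤ 1)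
    (hτL : τ ^ 2 * L ≤ μ) (hgp : g p = 0) (hy : ∀ k, y k ∈ Y)
    (hball : closedBall p (2 * √(2 * lyapunov φ μ p (y 0) (s 0) / μ)) ⊆ Y) (k : ℕ) :
    lyapunov φ μ p (y k) (s k) ≤ (1 - τ) ^ k * lyapunov φ μ p (y 0) (s 0) := by
  set V₀ := lyapunov φ μ p (y 0) (s 0)
  have hp : p ∈ Y := hball (mem_closedBall_self (by positivity))
  have hgrowth (k) : μ / 2 * ‖y k - p‖ ^ 2 ≤ φ (y k) - φ p :=
    hlow.mul_norm_sq_le_sub_of_grad_eq_zero (hy k) hp hgp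
  have hdist_y (k) : 0 ≤ μ / 2 * ‖y k - p‖ ^ 2 := by positivity
  have hdist_s (k) : 0 ≤ μ / 2 * ‖s k - p‖ ^ 2 := by positivity
  have hV₀ : 0 ≤ V₀ := add_nonneg ((hdist_y 0).trans (hgrowth 0)) (hdist_s 0)
  induction k with
  | zero => simp [V₀]
  | succ k ih =>
    have hV : φ (y k) - φ p + μ / 2 * ‖s k - p‖ ^ 2 ≤ V₀ :=
      ih.trans (mul_le_of_le_one_left hV₀ (pow_le_one₀ (by linarith) (by linarith)))
    have hyR : ‖y k - p‖ ≤ √(2 * V₀ / μ) :=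
      le_sqrt_of_half_mul_sq_le hμ (by linarith [hgrowth k, hdist_s k])
    have hsR : ‖s k - p‖ ≤ √(2 * V₀ / μ) :=
      le_sqrt_of_half_mul_sq_le hμ (by linarith [hgrowth k, hdist_y k])
    have hybarR : ybar k ∈ closedBall p √(2 * V₀ / μ) :=
      h.ybar_mem_closedBall hτ0 (mem_closedBall_iff_norm.2 hyR) (mem_closedBall_iff_norm.2 hsR)
    have hybar : ybar k ∈ Y :=
      hball (closedBall_subset_closedBall (by linarith [Real.sqrt_nonneg (2 * V₀ / μ)]) hybarR)
    have hdescent := hup.apply_gradientStep_le hL hball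
      (hlow.isMinOn_of_grad_eq_zero hμ.le hp hgp) hgp (mem_closedBall_iff_norm.1 hybarR)
    calc
      lyapunov φ μ p (y (k + 1)) (s (k + 1)) ≤ (1 - τ) * lyapunov φ μ p (y k) (s k) :=
        h.lyapunov_succ_le hlow hμ hL hτ0 hτ1 hτL (hy k) hybar hp hdescent
      _ ≤ (1 - τ) * ((1 - τ) ^ k * V₀) := mul_le_mul_of_nonneg_left ih (sub_nonneg.2 hτ1)
      _ = (1 - τ) ^ (k + 1) * V₀ := by ring

end IsLONAG

theorem stmt_15_general (hμ : 0 < μ) (hμL : μ ≤ L) (hlow : StrongConvexWithGradOn φ g μ Y)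
    (hup : SmoothWithGradOn φ g L Y) (hgp : g p = 0) (hτ0 : 0 < τ)
    (hτ : τ ≤ (L / μ) ^ (-(1 / 2 : ℝ))) (h : IsLONAG φ g μ τ y ybar s)
    (hlev : {v | φ v ≤ φ (y 0)} ⊆ Y)
    (hball : closedBall p (2 * √(2 * lyapunov φ μ p (y 0) (s 0) / μ)) ⊆ Y) :
    (∀ k, φ (y (k + 1)) ≤ φ (y k)) ∧
      ∀ k : ℕ, φ (y k) - φ p ≤ (1 - τ) ^ k * lyapunov φ μ p (y 0) (s 0) := by
  have hL : 0 < L := hμ.trans_le hμL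
  have hτL : τ ^ 2 * L ≤ μ := by
    rw [← le_div_iff₀ hL, ← inv_div]
    exact sq_le_inv_of_le_rpow_neg_half hτ0.le (by positivity) hτ
  have hτ1 : τ ≤ 1 := by
    have : τ ^ 2 ≤ 1 := le_of_mul_le_mul_right (by linarith) hL
    exact (sq_le_one_iff₀ hτ0.le).1 this
  refine ⟨h.apply_succ_le, fun k ↦ ?_⟩
  have hy (k) : y k ∈ Y := hlev (antitone_nat_of_succ_le (f := φ ∘ y) h.apply_succ_le k.zero_le)
  have hdist : 0 ≤ μ / 2 * ‖s k - p‖ ^ 2 := by positivity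
  exact (le_add_of_nonneg_right hdist).trans
    (h.lyapunov_le hlow hup hμ hL hτ0 hτ1 hτL hgp hy hball k)

end LONAG

/-- Under the assumptions of the LONAG containment-and-convergence theorem,
the LONAG iterates satisfy φ(y_k) ≤ φ(y_{k−1}) ≤ ⋯ ≤ φ(y₀) and
φ(y_k) − φ(y*) ≤ (1 − τ)^k ℒ₀ for all k ≥ 0. -/
theorem stmt_15 (m : ℕ) (hm : 0 < m)
    (φ : EuclideanSpace ℝ (Fin m) → ℝ) (hφ : Differentiable ℝ φ)
    (Y : Set (EuclideanSpace ℝ (Fin m))) (hY : Convex ℝ Y)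
    (μ L : ℝ) (hμ : 0 < μ) (hμL : μ ≤ L)
    (hconv : ∀ y₁ ∈ Y, ∀ y₂ ∈ Y,
      μ / 2 * ‖y₁ - y₂‖ ^ 2 ≤ φ y₁ - φ y₂ - ⟪gradient φ y₂, y₁ - y₂⟫ ∧
      φ y₁ - φ y₂ - ⟪gradient φ y₂, y₁ - y₂⟫ ≤ L / 2 * ‖y₁ - y₂‖ ^ 2)
    (hgradbd : ∀ y₁ ∈ Y, ∀ y₂ ∈ Y,
      μ * ‖y₁ - y₂‖ ≤ ‖gradient φ y₁ - gradient φ y₂‖ ∧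
      ‖gradient φ y₁ - gradient φ y₂‖ ≤ L * ‖y₁ - y₂‖)
    (ystar : EuclideanSpace ℝ (Fin m)) (hystar : ystar ∈ Y)
    (hmin : ∀ v ∈ Y, φ ystar ≤ φ v)
    (huniq : ∀ v ∈ Y, φ v = φ ystar → v = ystar)
    (hgrad0 : gradient φ ystar = 0)
    (κ : ℝ) (hκ : κ = L / μ)
    (τ : ℝ) (hτ0 : 0 < τ) (hτ : τ ≤ κ ^ (-(1/2 : ℝ)))
    (y ybar s : ℕ → EuclideanSpace ℝ (Fin m))
    (L0 R1 R2 : ℝ)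
    (hL0 : L0 = φ (y 0) - φ ystar + μ / 2 * ‖s 0 - ystar‖ ^ 2)
    (hR1 : R1 = Real.sqrt (2 * L0 / μ))
    (hR2 : R2 = max (2 * R1) ((1 + τ * κ) * R1))
    (hs0 : ‖s 0 - ystar‖ ≤ R1)
    (hlev : {v : EuclideanSpace ℝ (Fin m) | φ v ≤ φ (y 0)} ⊆
      {v | ‖v - ystar‖ ≤ R1})
    (hB12 : {v : EuclideanSpace ℝ (Fin m) | ‖v - ystar‖ ≤ R1} ⊆
      {v | ‖v - ystar‖ ≤ R2})
    (hB2Y : {v : EuclideanSpace ℝ (Fin m) | ‖v - ystar‖ ≤ R2} ⊆ Y)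
    (hrec1 : ∀ k, ybar k = (1 + τ)⁻¹ • (y k + τ • s k))
    (hrec2 : ∀ k, s (k+1) = (1 - τ) • s k + τ • ybar k - (τ / μ) • gradient φ (ybar k))
    (hrec3 : ∀ k, y (k+1) ∈
        (Submodule.span ℝ {y k, ybar k, gradient φ (ybar k)} :
          Submodule ℝ (EuclideanSpace ℝ (Fin m))) ∧
      ∀ v ∈ (Submodule.span ℝ {y k, ybar k, gradient φ (ybar k)} :
          Submodule ℝ (EuclideanSpace ℝ (Fin m))),
        φ (y (k+1)) ≤ φ v) :
    (∀ k, φ (y (k+1)) ≤ φ (y k)) ∧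
    ∀ k : ℕ, φ (y k) - φ ystar ≤ (1 - τ) ^ k * L0 := by
  subst hκ hL0 hR1 hR2
  exact stmt_15_general hμ hμL (fun y₁ h₁ y₂ h₂ ↦ (hconv y₁ h₁ y₂ h₂).1)
    (fun y₁ h₁ y₂ h₂ ↦ (hconv y₁ h₁ y₂ h₂).2) hgrad0 hτ0 hτ ⟨hrec1, hrec2, hrec3⟩
    (hlev.trans (hB12.trans hB2Y))
    fun v hv ↦ hB2Y ((mem_closedBall_iff_norm.1 hv).trans (le_max_left _ _))
end
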